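/- arXiv:1604.02278 — 7 statements merged into one kernel-verified Lean document; each statement's English description precedes it below -/
import Mathlib

section
/- For every real B > 0 consider the two-level instance with T = 2 periods, demands d = (0, B+1), supplier fixed ordering costs f^S = (0, 1), supplier unit ordering and holding costs p^S = h^S = (0, 0), retailer fixed ordering and holding costs f^R = h^R = (0, 0), retailer unit ordering costs p^R = (0, 1), and retailer inventory bounds u^R = (B, B). Then: (a) the minimum cost over all feasible two-level plans equals 1; (b) the minimum cost over all feasible two-level plans that additionally satisfy the zero-inventory-ordering property at the retailer level, i.e. s^R_{t-1}·x^R_t = 0 for t = 1, 2, equals B + 1. In particular the ratio between the best retailer-ZIO cost and the optimal cost is B + 1, which is unbounded as B → ∞. -/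
/-- A two-level plan: nonnegative supplier order/inventory `xS, sS` and retailer
order/inventory `xR, sR` with `sR 0 = sS 0 = 0`, satisfying the flow balance
`sR (t-1) + xR t = d t + sR t` and `sS (t-1) + xS t = xR t + sS t` for `t ∈ {1,…,T}`. -/
def TwoLevelPlan (T : ℕ) (d xR sR xS sS : ℕ → ℝ) : Prop :=
  sR 0 = 0 ∧ sS 0 = 0 ∧
  (∀ t ∈ Finset.Icc 1 T, 0 ≤ xR t ∧ 0 ≤ sR t ∧ 0 ≤ xS t ∧ 0 ≤ sS t) ∧
  (∀ t ∈ Finset.Icc 1 T, sR (t - 1) + xR t = d t + sR t) ∧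
  (∀ t ∈ Finset.Icc 1 T, sS (t - 1) + xS t = xR t + sS t)

/-- Cost of a two-level plan. -/
noncomputable def TwoLevelCost (T : ℕ) (fS pS hS fR pR hR : ℕ → ℝ)
    (xR sR xS sS : ℕ → ℝ) : ℝ :=
  ∑ t ∈ Finset.Icc 1 T,
    ((if 0 < xS t then fS t else 0) + pS t * xS t + hS t * sS t +
     (if 0 < xR t then fR t else 0) + pR t * xR t + hR t * sR t)

/-- For the instance with `T = 2`, `d = (0, B+1)`, `f^S = (0,1)`, `p^S = h^S = (0,0)`,
`f^R = h^R = (0,0)`, `p^R = (0,1)` and retailer inventory bounds `u^R = (B,B)`: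
(a) the minimum cost over all feasible two-level plans equals `1`;
(b) the minimum cost over all feasible two-level plans satisfying the retailer-level
zero-inventory-ordering property `sR (t-1) * xR t = 0` equals `B + 1`. -/
theorem stmt2 (B : ℝ) (hB : 0 < B) :
    IsLeast {c : ℝ | ∃ xR sR xS sS : ℕ → ℝ,
        TwoLevelPlan 2 (fun t => if t = 2 then B + 1 else 0) xR sR xS sS ∧
        (∀ t ∈ Finset.Icc 1 2, sR t ≤ B) ∧
        c = TwoLevelCost 2 (fun t => if t = 2 then 1 else 0) (fun _ => 0) (fun _ => 0)
              (fun _ => 0) (fun t => if t = 2 then 1 else 0) (fun _ => 0) xR sR xS sS} 1 ∧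
    IsLeast {c : ℝ | ∃ xR sR xS sS : ℕ → ℝ,
        TwoLevelPlan 2 (fun t => if t = 2 then B + 1 else 0) xR sR xS sS ∧
        (∀ t ∈ Finset.Icc 1 2, sR t ≤ B) ∧
        (∀ t ∈ Finset.Icc 1 2, sR (t - 1) * xR t = 0) ∧
        c = TwoLevelCost 2 (fun t => if t = 2 then 1 else 0) (fun _ => 0) (fun _ => 0)
              (fun _ => 0) (fun t => if t = 2 then 1 else 0) (fun _ => 0) xR sR xS sS}
      (B + 1) := by
  have hI : Finset.Icc 1 2 = ({1, 2} : Finset ℕ) := by decide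
  refine ⟨⟨?_, ?_⟩, ⟨?_, ?_⟩⟩
  · refine ⟨fun t => if t = 1 then B else if t = 2 then 1 else 0,
      fun t => if t = 1 then B else 0,
      fun t => if t = 1 then B + 1 else 0,
      fun t => if t = 1 then 1 else 0, ?_, ?_, ?_⟩
    · simp [TwoLevelPlan, hI]
      constructor <;> linarith
    · simp [hI]
      linarith
    · simp [TwoLevelCost, hI]
  · rintro c ⟨xR, sR, xS, sS, ⟨h1, h2, h3, h4, h5⟩, h6, rfl⟩
    simp [hI] at h3 h4 h5 h6
    simp [TwoLevelCost, hI]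
    split_ifs <;> linarith
  · refine ⟨fun t => if t = 2 then B + 1 else 0,
      fun _ => 0,
      fun t => if t = 1 then B + 1 else 0,
      fun t => if t = 1 then B + 1 else 0, ?_, ?_, ?_, ?_⟩
    · simp [TwoLevelPlan, hI]
      linarith
    · simp [hI]
      linarith
    · simp [hI]
    · simp [TwoLevelCost, hI]
  · rintro c ⟨xR, sR, xS, sS, ⟨h1, h2, h3, h4, h5⟩, h6, h7, rfl⟩
    simp [hI] at h3 h4 h5 h6 h7
    simp [TwoLevelCost, hI]
    rcases h7.2 with h | h <;> split_ifs <;> linarith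
end

section
/- Let x_t, s_t (t = 1,…,T) be nonnegative reals with s_0 = 0 satisfying s_{t-1} + x_t = d_t + s_t and s_t ≤ u_t for all t, where d_t, u_t ≥ 0 and where u_{t-1} ≤ u_t + d_t for all t ∈ {2,…,T}. Let 1 ≤ i ≤ j ≤ T be such that s_{i-1} ∈ {0, u_{i-1}} (with u_0 := 0), s_j = u_j, and 0 < s_t < u_t for all i ≤ t ≤ j−1 (i.e., [i,j] is a block with leaving inventory equal to the bound u_j). Assume that at most one period t ∈ {i,…,j} has x_t > 0. If some period t ∈ {i,…,j} has x_t > 0, then x_j > 0; that is, the unique ordering period of the block is its last period j. -/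
/-- In a feasible single-level plan with normalized inventory bounds
(`u (t-1) ≤ u t + d t` for `t ∈ {2,…,T}`), consider a block `[i,j]` with leaving
inventory equal to the bound, `s j = u j` (entering inventory `s (i-1) ∈ {0, u (i-1)}`
with `u 0 = 0`, and `0 < s t < u t` for `i ≤ t ≤ j-1`), containing at most one
ordering period. If the block contains an ordering period, then it is the last
period `j` of the block. -/
theorem stmt5 (T : ℕ) (hT : 1 ≤ T) (d u x s : ℕ → ℝ)
    (hd : ∀ t ∈ Finset.Icc 1 T, 0 ≤ d t) (hu : ∀ t ∈ Finset.Icc 1 T, 0 ≤ u t)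
    (hu0 : u 0 = 0)
    (hnorm : ∀ t ∈ Finset.Icc 2 T, u (t - 1) ≤ u t + d t)
    (hx : ∀ t ∈ Finset.Icc 1 T, 0 ≤ x t) (hs : ∀ t ∈ Finset.Icc 1 T, 0 ≤ s t)
    (hs0 : s 0 = 0)
    (hflow : ∀ t ∈ Finset.Icc 1 T, s (t - 1) + x t = d t + s t)
    (hbound : ∀ t ∈ Finset.Icc 1 T, s t ≤ u t)
    (i j : ℕ) (hi : 1 ≤ i) (hij : i ≤ j) (hjT : j ≤ T)
    (hin : s (i - 1) = 0 ∨ s (i - 1) = u (i - 1))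
    (hout : s j = u j)
    (hblk : ∀ t : ℕ, i ≤ t → t ≤ j - 1 → 0 < s t ∧ s t < u t)
    (huniq : ∀ t₁ ∈ Finset.Icc i j, ∀ t₂ ∈ Finset.Icc i j,
      0 < x t₁ → 0 < x t₂ → t₁ = t₂)
    (hex : ∃ t ∈ Finset.Icc i j, 0 < x t) :
    0 < x j := by
  obtain ⟨t, ht, hxt⟩ := hex
  rw [Finset.mem_Icc] at ht
  rcases Nat.lt_or_ge i j with h | h
  · have h1 := hnorm j (Finset.mem_Icc.mpr ⟨by omega, hjT⟩)
    have h2 := hflow j (Finset.mem_Icc.mpr ⟨by omega, hjT⟩)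
    have h3 := (hblk (j - 1) (by omega) le_rfl).2
    linarith
  · have h4 : t = j := by omega
    rwa [← h4]
end

section
/- Let 2 ≤ i ≤ k ≤ j ≤ T, let d_t ≥ 0, f_t, p_t, h_t ≥ 0, u_t ≥ 0 (t = 1,…,T), and let β ≥ 0. Suppose the unique single-order plan on {i,…,j} determined by s_{i-1} = u_{i-1}, s_j = β, x_t = 0 for t ∈ {i,…,j} \ {k} and flow balance s_{t-1} + x_t = d_t + s_t has x_k = d_{ij} + β − u_{i-1} > 0, satisfies 0 < s_t < u_t for all i ≤ t ≤ j−1, and has cost c = f_k + p_k x_k + Σ_{n=i}^{j} h_n s_n. If d_{i-1,k-1} < u_{i-2} < u_{i-1} + d_{i-1}, then the single-order plan on {i−1,…,j} determined by s_{i-2} = u_{i-2}, s_j = β, x_t = 0 for t ∈ {i−1,…,j} \ {k} also satisfies 0 < s_t < u_t for all i−1 ≤ t ≤ j−1, has x_k = d_{i-1,j} + β − u_{i-2} > 0, and its cost f_k + p_k x_k + Σ_{n=i-1}^{j} h_n s_n equals c + h_{i-1}(u_{i-2} − d_{i-1}) + (p_k − Σ_{n=i}^{k-1} h_n)·(u_{i-1}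 − u_{i-2} + d_{i-1}). In particular, the cost of the extended block [i−1,j] with entering inventory u_{i-2} can be computed from that of the block [i,j] with entering inventory u_{i-1} in constant time, independently of j. -/
/-- Extending a block one period to the left: if the single-order plan on `{i,…,j}`
with entering inventory `u (i-1)`, leaving inventory `β` and ordering period `k` has
`x k = d_{ij} + β − u (i-1) > 0`, keeps inventories strictly between `0` and the
bounds, and costs `c = f k + p k x k + Σ_{n=i}^{j} h n s n`, and if
`d_{i-1,k-1} < u (i-2) < u (i-1) + d (i-1)`, then the single-order plan on
`{i-1,…,j}` with entering inventory `u (i-2)`, leaving inventory `β` and ordering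
period `k` also keeps inventories strictly between the bounds, orders
`x' k = d_{i-1,j} + β − u (i-2) > 0`, and costs
`c + h (i-1) (u (i-2) − d (i-1)) + (p k − Σ_{n=i}^{k-1} h n) (u (i-1) − u (i-2) + d (i-1))`. -/
theorem stmt8 (T : ℕ) (d f p h u : ℕ → ℝ)
    (hd : ∀ t ∈ Finset.Icc 1 T, 0 ≤ d t) (hf : ∀ t ∈ Finset.Icc 1 T, 0 ≤ f t)
    (hp : ∀ t ∈ Finset.Icc 1 T, 0 ≤ p t) (hh : ∀ t ∈ Finset.Icc 1 T, 0 ≤ h t)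
    (hu : ∀ t ∈ Finset.Icc 1 T, 0 ≤ u t)
    (i k j : ℕ) (hi : 2 ≤ i) (hik : i ≤ k) (hkj : k ≤ j) (hjT : j ≤ T)
    (β : ℝ) (hβ : 0 ≤ β)
    (x s : ℕ → ℝ)
    (hin : s (i - 1) = u (i - 1)) (hout : s j = β)
    (hx0 : ∀ t ∈ Finset.Icc i j, t ≠ k → x t = 0)
    (hflow : ∀ t ∈ Finset.Icc i j, s (t - 1) + x t = d t + s t)
    (hxk : x k = (∑ t ∈ Finset.Icc i j, d t) + β - u (i - 1))
    (hxkpos : 0 < x k)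
    (hblk : ∀ t ∈ Finset.Icc i (j - 1), 0 < s t ∧ s t < u t)
    (c : ℝ)
    (hc : c = f k + p k * x k + ∑ n ∈ Finset.Icc i j, h n * s n)
    (hlow : (∑ t ∈ Finset.Icc (i - 1) (k - 1), d t) < u (i - 2))
    (hhigh : u (i - 2) < u (i - 1) + d (i - 1)) :
    ∀ x' s' : ℕ → ℝ,
      s' (i - 2) = u (i - 2) → s' j = β →
      (∀ t ∈ Finset.Icc (i - 1) j, t ≠ k → x' t = 0) →
      (∀ t ∈ Finset.Icc (i - 1) j, s' (t - 1) + x' t = d t + s' t) →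
      (∀ t ∈ Finset.Icc (i - 1) (j - 1), 0 < s' t ∧ s' t < u t) ∧
      x' k = (∑ t ∈ Finset.Icc (i - 1) j, d t) + β - u (i - 2) ∧
      0 < x' k ∧
      f k + p k * x' k + ∑ n ∈ Finset.Icc (i - 1) j, h n * s' n =
        c + h (i - 1) * (u (i - 2) - d (i - 1)) +
          (p k - ∑ n ∈ Finset.Icc i (k - 1), h n) * (u (i - 1) - u (i - 2) + d (i - 1)) := by
  intro x' s' hin' hout' hx0' hflow'
  obtain ⟨m, rfl⟩ : ∃ m, i = m + 2 := ⟨i - 2, by omega⟩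
  obtain ⟨l, rfl⟩ : ∃ l, k = l + 1 := ⟨k - 1, by omega⟩
  have e1 : m + 2 - 1 = m + 1 := by omega
  have e2 : m + 2 - 2 = m := by omega
  have e3 : l + 1 - 1 = l := by omega
  simp only [e1, e2, e3] at *
  set δ := u (m+1) - u m + d (m+1) with hδ
  have hδpos : 0 < δ := by linarith
  have step : ∀ t, m + 2 ≤ t + 1 → t + 1 ≤ j → s t + x (t+1) = d (t+1) + s (t+1) := by
    intro t h1 h2
    have := hflow (t+1) (Finset.mem_Icc.2 ⟨h1, h2⟩)
    simpa using this
  have step' : ∀ t, m + 1 ≤ t + 1 → t + 1 ≤ j → s' t + x' (t+1) = d (t+1) + s' (t+1) := by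
    intro t h1 h2
    have := hflow' (t+1) (Finset.mem_Icc.2 ⟨h1, h2⟩)
    simpa using this
  have A : ∀ t, m + 1 ≤ t → t ≤ l →
      s' t = s t - δ ∧ s' t = u m - ∑ n ∈ Finset.Icc (m+1) t, d n := by
    intro t ht
    induction t, ht using Nat.le_induction with
    | base =>
      intro _
      have h1 := step' m (by omega) (by omega)
      have h2 := hx0' (m+1) (Finset.mem_Icc.2 ⟨by omega, by omega⟩) (by omega)
      rw [Finset.Icc_self, Finset.sum_singleton]
      constructor <;> linarith
    | succ t ht ih =>
      intro hl
      obtain ⟨i1, i2⟩ := ih (by omega)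
      have h1 := step' t (by omega) (by omega)
      have h2 := hx0' (t+1) (Finset.mem_Icc.2 ⟨by omega, by omega⟩) (by omega)
      have h3 := step t (by omega) (by omega)
      have h4 := hx0 (t+1) (Finset.mem_Icc.2 ⟨by omega, by omega⟩) (by omega)
      rw [Finset.sum_Icc_succ_top (by omega)]
      constructor <;> linarith
  have B : ∀ n t, t + n = j → l + 1 ≤ t → s' t = s t := by
    intro n
    induction n with
    | zero =>
      intro t ht _
      have : t = j := by omega
      subst this
      linarith
    | succ n ih =>
      intro t ht hl
      have i1 := ih (t+1) (by omega) (by omega)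
      have h1 := step' t (by omega) (by omega)
      have h2 := hx0' (t+1) (Finset.mem_Icc.2 ⟨by omega, by omega⟩) (by omega)
      have h3 := step t (by omega) (by omega)
      have h4 := hx0 (t+1) (Finset.mem_Icc.2 ⟨by omega, by omega⟩) (by omega)
      linarith
  have B' : ∀ t, l + 1 ≤ t → t ≤ j → s' t = s t := fun t h1 h2 =>
    B (j - t) t (by omega) h1
  have hx : x' (l+1) = x (l+1) + δ := by
    have h1 := step' l (by omega) (by omega)
    have h3 := step l (by omega) (by omega)
    have h5 := (A l (by omega) le_rfl).1
    have h6 := B' (l+1) le_rfl (by omega)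
    linarith
  have split : ∀ g : ℕ → ℝ, ∑ t ∈ Finset.Icc (m+1) j, g t
      = g (m+1) + ∑ t ∈ Finset.Icc (m+2) j, g t := by
    intro g
    rw [← Finset.add_sum_Ioc_eq_sum_Icc (by omega)]
    congr 2
    ext t
    simp only [Finset.mem_Ioc, Finset.mem_Icc]
    omega
  refine ⟨?_, ?_, by linarith, ?_⟩
  · intro t ht
    rw [Finset.mem_Icc] at ht
    by_cases htl : t ≤ l
    · obtain ⟨a1, a2⟩ := A t ht.1 htl
      have hle : ∑ n ∈ Finset.Icc (m+1) t, d n ≤ ∑ n ∈ Finset.Icc (m+1) l, d n := by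
        apply Finset.sum_le_sum_of_subset_of_nonneg
        · exact Finset.Icc_subset_Icc le_rfl htl
        · intro n hn _
          rw [Finset.mem_Icc] at hn
          exact hd n (Finset.mem_Icc.2 ⟨by omega, by omega⟩)
      refine ⟨by linarith, ?_⟩
      by_cases htm : t = m + 1
      · subst htm; linarith
      · have := hblk t (Finset.mem_Icc.2 ⟨by omega, ht.2⟩)
        linarith [this.2]
    · rw [B' t (by omega) (by omega)]
      exact hblk t (Finset.mem_Icc.2 ⟨by omega, ht.2⟩)
  · rw [split, hx, hxk]; linarith
  · have hs : ∑ n ∈ Finset.Icc (m+2) l, h n * δ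
        = ∑ n ∈ Finset.Icc (m+2) j, (h n * s n - h n * s' n) := by
      rw [← Finset.sum_subset (Finset.Icc_subset_Icc (le_refl (m+2)) (by omega : l ≤ j))]
      · apply Finset.sum_congr rfl
        intro n hn
        rw [Finset.mem_Icc] at hn
        rw [(A n (by omega) hn.2).1]; ring
      · intro n hn hn'
        rw [Finset.mem_Icc] at hn hn'
        rw [B' n (by omega) hn.2]; ring
    rw [Finset.sum_sub_distrib, ← Finset.sum_mul] at hs
    have h1 := step' m (by omega) (by omega)
    have h2 := hx0' (m+1) (Finset.mem_Icc.2 ⟨by omega, by omega⟩) (by omega)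
    have h3 : s' (m+1) = u m - d (m+1) := by linarith
    rw [split, hx, hc, h3]
    linarith
end

section
/- Let n ≥ 1 and let S, a_1,…,a_n be positive integers. Build the following two-level instance with T = 2n + 1 periods and supplier inventory bounds: demands d_t = 0 for t ≤ 2n and d_T = S; supplier fixed ordering costs f^S_t = 1 for odd t ≤ 2n and f^S_t = 2S for even t ≤ 2n and for t = T; retailer fixed ordering costs f^R_t = 2S for odd t ≤ 2n and for t = T, and f^R_t = 0 for even t ≤ 2n; all holding costs h^S_t = h^R_t = 0; retailer unit ordering costs p^R_t = 0; supplier unit ordering costs p^S_t = 1 − 1/a_{⌈t/2⌉} for t ≤ 2n and p^S_T = 0; supplier inventory bounds u^S_t = a_{⌈t/2⌉} for t ≤ 2n and u^S_T = 0 (no retailer inventory bound). Then there exists a feasible two-level plan of this instance with total cost at most S if and only if there exists a subset A ⊆ {1,…,n} with Σ_{i∈A} a_i = S. -/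
lemma split_sum_aux (n : ℕ) (f : ℕ → ℝ) :
    ∑ t ∈ Finset.Icc 1 (2 * n), f t = ∑ i ∈ Finset.Icc 1 n, (f (2 * i - 1) + f (2 * i)) := by
  induction n with
  | zero => simp
  | succ k ih =>
    rw [show 2 * (k + 1) = 2 * k + 1 + 1 by ring, Finset.sum_Icc_succ_top (by omega),
      Finset.sum_Icc_succ_top (by omega), Finset.sum_Icc_succ_top (by omega), ih]
    rw [show 2 * (k + 1) - 1 = 2 * k + 1 by omega, show 2 * (k + 1) = 2 * k + 1 + 1 by ring]
    ring

lemma telescope_aux (T : ℕ) (s x y : ℕ → ℝ) (h0 : s 0 = 0)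
    (h : ∀ t ∈ Finset.Icc 1 T, s (t - 1) + x t = y t + s t) :
    ∑ t ∈ Finset.Icc 1 T, x t = ∑ t ∈ Finset.Icc 1 T, y t + s T := by
  induction T with
  | zero => simp [h0]
  | succ k ih =>
    have h1 := ih (fun t ht => h t (by simp only [Finset.mem_Icc] at *; omega))
    have h2 := h (k + 1) (by simp)
    rw [Finset.sum_Icc_succ_top (by omega), Finset.sum_Icc_succ_top (by omega)]
    simp only [Nat.add_sub_cancel] at h2
    linarith

/-- Reduction from Subset Sum: for the `2ULS-IB_S` instance with `T = 2n+1`,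
demands `d t = 0` for `t ≤ 2n`, `d T = S`; supplier fixed costs `1` at odd `t ≤ 2n`
and `2S` elsewhere; retailer fixed costs `0` at even `t ≤ 2n` and `2S` elsewhere;
zero holding costs; `p^R = 0`; `p^S t = 1 − 1/a_{⌈t/2⌉}` for `t ≤ 2n` and `p^S T = 0`;
supplier inventory bounds `u^S t = a_{⌈t/2⌉}` for `t ≤ 2n` and `u^S T = 0`:
there is a feasible plan of cost at most `S` iff some subset of `{a_1,…,a_n}` sums
to `S`. -/
theorem stmt9 (n S : ℕ) (hn : 1 ≤ n) (hS : 0 < S) (a : ℕ → ℕ)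
    (ha : ∀ i ∈ Finset.Icc 1 n, 0 < a i) :
    (∃ xR sR xS sS : ℕ → ℝ,
      TwoLevelPlan (2 * n + 1) (fun t => if t = 2 * n + 1 then (S : ℝ) else 0) xR sR xS sS ∧
      (∀ t ∈ Finset.Icc 1 (2 * n + 1),
        sS t ≤ (if t ≤ 2 * n then (a ((t + 1) / 2) : ℝ) else 0)) ∧
      TwoLevelCost (2 * n + 1)
        (fun t => if t ≤ 2 * n ∧ t % 2 = 1 then 1 else 2 * S)
        (fun t => if t ≤ 2 * n then 1 - 1 / (a ((t + 1) / 2) : ℝ) else 0)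
        (fun _ => 0)
        (fun t => if t ≤ 2 * n ∧ t % 2 = 0 then 0 else 2 * S)
        (fun _ => 0)
        (fun _ => 0) xR sR xS sS ≤ S) ↔
    (∃ A : Finset ℕ, A ⊆ Finset.Icc 1 n ∧ ∑ i ∈ A, a i = S) := by
  constructor
  · rintro ⟨xR, sR, xS, sS, ⟨hR0, hS0, hnn, hfR, hfS⟩, hub, hcost⟩
    have hS1 : (1 : ℝ) ≤ S := by exact_mod_cast hS
    have e1 := telescope_aux _ _ _ _ hR0 hfR
    have e2 := telescope_aux _ _ _ _ hS0 hfS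
    have hd : ∑ t ∈ Finset.Icc 1 (2 * n + 1), (if t = 2 * n + 1 then (S : ℝ) else 0) = S := by
      simp
    rw [hd] at e1
    have hT := hnn (2 * n + 1) (by simp)
    have hge : (S : ℝ) ≤ ∑ t ∈ Finset.Icc 1 (2 * n + 1), xS t := by
      linarith [hT.2.1, hT.2.2.2]
    have hinv : ∀ t ∈ Finset.Icc 1 (2 * n + 1), t ≤ 2 * n →
        (1 : ℝ) ≤ (a ((t + 1) / 2) : ℝ) := by
      intro t ht h
      simp only [Finset.mem_Icc] at ht
      exact_mod_cast ha ((t + 1) / 2) (by simp only [Finset.mem_Icc]; omega)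
    unfold TwoLevelCost at hcost
    simp only [zero_mul, add_zero] at hcost
    set c : ℕ → ℝ := fun t =>
      (if 0 < xS t then (if t ≤ 2 * n ∧ t % 2 = 1 then (1 : ℝ) else 2 * S) else 0)
        + (if t ≤ 2 * n then 1 - 1 / (a ((t + 1) / 2) : ℝ) else 0) * xS t
        + (if 0 < xR t then (if t ≤ 2 * n ∧ t % 2 = 0 then (0 : ℝ) else 2 * S) else 0) with hc
    have hcost' : ∑ t ∈ Finset.Icc 1 (2 * n + 1), c t ≤ S := hcost
    have hp : ∀ t ∈ Finset.Icc 1 (2 * n + 1),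
        0 ≤ (if t ≤ 2 * n then 1 - 1 / (a ((t + 1) / 2) : ℝ) else 0) * xS t := by
      intro t ht
      refine mul_nonneg ?_ (hnn t ht).2.2.1
      split_ifs with h
      · have := hinv t ht h
        have h2 : 1 / (a ((t + 1) / 2) : ℝ) ≤ 1 := by
          rw [div_le_one (by linarith)]; exact this
        linarith
      · exact le_rfl
    have hf1 : ∀ t, 0 ≤ (if 0 < xS t then
        (if t ≤ 2 * n ∧ t % 2 = 1 then (1 : ℝ) else 2 * S) else 0) := by
      intro t; split_ifs <;> linarith
    have hf2 : ∀ t, 0 ≤ (if 0 < xR t then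
        (if t ≤ 2 * n ∧ t % 2 = 0 then (0 : ℝ) else 2 * S) else 0) := by
      intro t; split_ifs <;> linarith
    have hc0 : ∀ t ∈ Finset.Icc 1 (2 * n + 1), 0 ≤ c t := by
      intro t ht
      have := hp t ht; have := hf1 t; have := hf2 t
      simp only [hc]; linarith
    have hcS : ∀ t ∈ Finset.Icc 1 (2 * n + 1), c t ≤ S := by
      intro t ht
      exact (Finset.single_le_sum hc0 ht).trans hcost'
    have hxS0 : ∀ t ∈ Finset.Icc 1 (2 * n + 1), ¬ (t ≤ 2 * n ∧ t % 2 = 1) → xS t = 0 := by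
      intro t ht h
      by_contra hne
      have hpos : 0 < xS t := lt_of_le_of_ne (hnn t ht).2.2.1 (Ne.symm hne)
      have h1 := hcS t ht
      have := hp t ht; have := hf2 t
      simp only [hc] at h1
      rw [if_pos hpos, if_neg h] at h1
      linarith
    have hxR0 : ∀ t ∈ Finset.Icc 1 (2 * n + 1), ¬ (t ≤ 2 * n ∧ t % 2 = 0) → xR t = 0 := by
      intro t ht h
      by_contra hne
      have hpos : 0 < xR t := lt_of_le_of_ne (hnn t ht).1 (Ne.symm hne)
      have h1 := hcS t ht
      have := hp t ht; have := hf1 t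
      simp only [hc] at h1
      rw [if_pos hpos, if_neg h] at h1
      linarith
    have hxa : ∀ t ∈ Finset.Icc 1 (2 * n + 1), t ≤ 2 * n ∧ t % 2 = 1 →
        xS t ≤ (a ((t + 1) / 2) : ℝ) := by
      intro t ht h
      have h1 := hxR0 t ht (by omega)
      have h2 := hub t ht
      rw [if_pos h.1] at h2
      have h3 := hfS t ht
      have h4 : 0 ≤ sS (t - 1) := by
        by_cases h5 : t - 1 = 0
        · rw [h5, hS0]
        · exact (hnn (t - 1) (by simp only [Finset.mem_Icc] at *; omega)).2.2.2
      linarith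
    have hcval : ∀ t ∈ Finset.Icc 1 (2 * n + 1), t ≤ 2 * n ∧ t % 2 = 1 → 0 < xS t →
        c t = 1 - xS t / (a ((t + 1) / 2) : ℝ) + xS t := by
      intro t ht h hpos
      simp only [hc]
      rw [if_pos hpos, if_pos h, if_pos h.1, hxR0 t ht (by omega)]
      simp only [lt_irrefl, if_false]
      ring
    have hle : ∀ t ∈ Finset.Icc 1 (2 * n + 1), xS t ≤ c t := by
      intro t ht
      rcases eq_or_lt_of_le (hnn t ht).2.2.1 with h0 | hpos
      · rw [← h0]; exact hc0 t ht
      · have h : t ≤ 2 * n ∧ t % 2 = 1 := by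
          by_contra h
          exact hpos.ne' (hxS0 t ht h)
        rw [hcval t ht h hpos]
        have : xS t / (a ((t + 1) / 2) : ℝ) ≤ 1 := by
          rw [div_le_one (by linarith [hinv t ht h.1])]
          exact hxa t ht h
        linarith
    have hsle := Finset.sum_le_sum hle
    have hsum : ∑ t ∈ Finset.Icc 1 (2 * n + 1), xS t = S := by linarith
    have heq : ∀ t ∈ Finset.Icc 1 (2 * n + 1), xS t = c t :=
      (Finset.sum_eq_sum_iff_of_le hle).1 (by linarith)
    refine ⟨(Finset.Icc 1 n).filter (fun i => 0 < xS (2 * i - 1)), Finset.filter_subset _ _, ?_⟩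
    have key : ((∑ i ∈ (Finset.Icc 1 n).filter (fun i => 0 < xS (2 * i - 1)), a i : ℕ) : ℝ)
        = S := by
      rw [← hsum, Finset.sum_Icc_succ_top (by omega), split_sum_aux,
        hxS0 (2 * n + 1) (by simp) (by omega), add_zero]
      push_cast
      rw [Finset.sum_filter]
      refine Finset.sum_congr rfl fun i hi => ?_
      simp only [Finset.mem_Icc] at hi
      rw [hxS0 (2 * i) (by simp only [Finset.mem_Icc]; omega) (by omega), add_zero]
      have ht : 2 * i - 1 ∈ Finset.Icc 1 (2 * n + 1) := by simp only [Finset.mem_Icc]; omega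
      have hio : 2 * i - 1 ≤ 2 * n ∧ (2 * i - 1) % 2 = 1 := by omega
      split_ifs with hpos
      · have h1 := hcval _ ht hio hpos
        rw [← heq _ ht, show (2 * i - 1 + 1) / 2 = i by omega] at h1
        have h2 := hinv _ ht hio.1
        rw [show (2 * i - 1 + 1) / 2 = i by omega] at h2
        have h3 : xS (2 * i - 1) / (a i : ℝ) = 1 := by linarith
        rw [div_eq_one_iff_eq (by linarith)] at h3
        exact h3.symm
      · exact le_antisymm (hnn _ ht).2.2.1 (not_lt.1 hpos)
    exact_mod_cast key
  · rintro ⟨A, hA, hsum⟩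
    have hAn : ∀ i ∈ A, 1 ≤ i ∧ i ≤ n := fun i hi => Finset.mem_Icc.1 (hA hi)
    have hsumR : ∑ i ∈ Finset.Icc 1 n, (if i ∈ A then (a i : ℝ) else 0) = S := by
      rw [← Finset.sum_filter, Finset.filter_mem_eq_inter, Finset.inter_eq_right.2 hA]
      exact_mod_cast hsum
    set xS : ℕ → ℝ := fun t =>
      if t % 2 = 1 ∧ (t + 1) / 2 ∈ A then (a ((t + 1) / 2) : ℝ) else 0 with hxS
    set xR : ℕ → ℝ := fun t => if t % 2 = 0 ∧ t / 2 ∈ A then (a (t / 2) : ℝ) else 0 with hxR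
    have hxSn : ∀ t, 0 ≤ xS t := by
      intro t; simp only [hxS]; split_ifs <;> positivity
    have hxRn : ∀ t, 0 ≤ xR t := by
      intro t; simp only [hxR]; split_ifs <;> positivity
    have hxSe : ∀ t, t % 2 = 0 → xS t = 0 := by
      intro t ht; simp only [hxS]; rw [if_neg (by omega)]
    have hxRo : ∀ t, t % 2 = 1 → xR t = 0 := by
      intro t ht; simp only [hxR]; rw [if_neg (by omega)]
    have hxSl : xS (2 * n + 1) = 0 := by
      simp only [hxS]
      rw [if_neg]
      rintro ⟨-, h⟩
      have := hAn _ h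
      omega
    have hxSv : ∀ i, 1 ≤ i → xS (2 * i - 1) = if i ∈ A then (a i : ℝ) else 0 := by
      intro i hi
      simp only [hxS]
      rw [show (2 * i - 1 + 1) / 2 = i by omega, show (2 * i - 1) % 2 = 1 by omega]
      simp
    have hxRv : ∀ i, xR (2 * i) = if i ∈ A then (a i : ℝ) else 0 := by
      intro i
      simp only [hxR]
      rw [show (2 * i) / 2 = i by omega, show (2 * i) % 2 = 0 by omega]
      simp
    have hRs : ∑ t ∈ Finset.Icc 1 (2 * n), xR t = S := by
      rw [split_sum_aux, ← hsumR]
      refine Finset.sum_congr rfl fun i hi => ?_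
      simp only [Finset.mem_Icc] at hi
      rw [hxRo _ (by omega), hxRv, zero_add]
    refine ⟨xR, fun t => if t = 2 * n + 1 then 0 else ∑ k ∈ Finset.Icc 1 t, xR k, xS, xS,
      ⟨by simp, hxSe 0 rfl, ?_, ?_, ?_⟩, ?_, ?_⟩
    · intro t ht
      refine ⟨hxRn t, ?_, hxSn t, hxSn t⟩
      dsimp only
      split_ifs
      · exact le_rfl
      · exact Finset.sum_nonneg fun k _ => hxRn k
    · intro t ht
      simp only [Finset.mem_Icc] at ht
      obtain ⟨k, rfl⟩ : ∃ k, t = k + 1 := ⟨t - 1, by omega⟩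
      dsimp only
      rw [Nat.add_sub_cancel, if_neg (by omega : ¬ k = 2 * n + 1)]
      by_cases h : k + 1 = 2 * n + 1
      · rw [if_pos h, if_pos h]
        have hk : k = 2 * n := by omega
        subst hk
        rw [hRs, hxRo _ (by omega)]
      · rw [if_neg h, if_neg h, Finset.sum_Icc_succ_top (by omega), zero_add]
    · intro t ht
      simp only [Finset.mem_Icc] at ht
      rcases Nat.even_or_odd' t with ⟨i, h | h⟩
      · subst h
        rw [hxSe (2 * i) (by omega), hxSv i (by omega), hxRv]
      · subst h
        rw [hxRo _ (by omega), Nat.add_sub_cancel, hxSe (2 * i) (by omega)]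
    · intro t ht
      split_ifs with h
      · simp only [hxS]
        split_ifs
        · exact le_rfl
        · positivity
      · simp only [Finset.mem_Icc] at ht
        rw [show t = 2 * n + 1 by omega, hxSl]
    · unfold TwoLevelCost
      rw [Finset.sum_Icc_succ_top (by omega), split_sum_aux, hxSl, hxRo (2 * n + 1) (by omega)]
      simp only [lt_irrefl, if_false, zero_mul, mul_zero, add_zero]
      rw [← hsumR]
      refine Finset.sum_le_sum fun i hi => ?_
      have hai : (0 : ℝ) < a i := by exact_mod_cast ha i hi
      simp only [Finset.mem_Icc] at hi
      rw [hxSe (2 * i) (by omega), hxRo (2 * i - 1) (by omega), hxSv i hi.1, hxRv,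
        show (2 * i - 1 + 1) / 2 = i by omega,
        if_pos (by omega : 2 * i - 1 ≤ 2 * n ∧ (2 * i - 1) % 2 = 1),
        if_pos (by omega : 2 * i - 1 ≤ 2 * n),
        if_pos (by omega : 2 * i ≤ 2 * n ∧ (2 * i) % 2 = 0)]
      by_cases hiA : i ∈ A
      · simp only [if_pos hiA, if_pos hai, lt_irrefl, if_false, mul_zero, add_zero]
        apply le_of_eq
        field_simp
        ring
      · simp [hiA]
end

section
/- Let (d, f, p, h, u) be a single-level no-lot-splitting instance over T periods with nonnegative integer demands d_t and nonnegative real costs and bounds, and suppose it admits at least one feasible NLS plan; let C* denote the minimum cost of a feasible single-level NLS plan. Let M be a real number with M > C*. Consider the two-level no-lot-splitting instance with the same demands d, supplier costs f^S = f, p^S = p, h^S = h, supplier inventory bounds u^S = u, retailer costs f^R_t = p^R_t = 0 and h^R_t = M for all t, and no retailer inventory bound. Then the minimum total cost over all feasible two-level NLS plans of this instance equals C*. -/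
/-- Order quantities induced by a no-lot-splitting assignment `σ`:
`x k = Σ_{t : d t > 0, σ t = k} d t`. -/
def nlsX (T : ℕ) (d : ℕ → ℕ) (σ : ℕ → ℕ) (k : ℕ) : ℕ :=
  ∑ t ∈ (Finset.Icc 1 T).filter (fun t => 0 < d t ∧ σ t = k), d t

/-- Inventories induced by delivery periods `σ`:
`s t = Σ_{k : d k > 0, σ k ≤ t < k} d k`. -/
def nlsS (T : ℕ) (d : ℕ → ℕ) (σ : ℕ → ℕ) (t : ℕ) : ℕ :=
  ∑ k ∈ (Finset.Icc 1 T).filter (fun k => 0 < d k ∧ σ k ≤ t ∧ t < k), d k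

/-- Supplier inventories of a two-level NLS plan `(σR, σS)`:
`sS t = Σ_{k : d k > 0, σS k ≤ t < σR k} d k`. -/
def nls2SS (T : ℕ) (d : ℕ → ℕ) (σR σS : ℕ → ℕ) (t : ℕ) : ℕ :=
  ∑ k ∈ (Finset.Icc 1 T).filter (fun k => 0 < d k ∧ σS k ≤ t ∧ t < σR k), d k

/-- Cost of a single-level NLS plan. -/
noncomputable def nlsCost (T : ℕ) (d : ℕ → ℕ) (f p h : ℕ → ℝ) (σ : ℕ → ℕ) : ℝ :=
  ∑ t ∈ Finset.Icc 1 T,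
    ((if 0 < nlsX T d σ t then f t else 0) + p t * (nlsX T d σ t : ℝ) +
      h t * (nlsS T d σ t : ℝ))

/-- Cost of a two-level NLS plan `(σR, σS)`. -/
noncomputable def nls2Cost (T : ℕ) (d : ℕ → ℕ) (fS pS hS fR pR hR : ℕ → ℝ)
    (σR σS : ℕ → ℕ) : ℝ :=
  ∑ t ∈ Finset.Icc 1 T,
    ((if 0 < nlsX T d σS t then fS t else 0) + pS t * (nlsX T d σS t : ℝ) +
      hS t * (nls2SS T d σR σS t : ℝ) +
     (if 0 < nlsX T d σR t then fR t else 0) + pR t * (nlsX T d σR t : ℝ) +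
      hR t * (nlsS T d σR t : ℝ))

theorem aux_SS (T : ℕ) (d σR σS : ℕ → ℕ)
    (hR : ∀ t ∈ Finset.Icc 1 T, 0 < d t → σR t = t) (t : ℕ) :
    nls2SS T d σR σS t = nlsS T d σS t := by
  unfold nls2SS nlsS
  congr 1
  apply Finset.filter_congr
  intro k hk
  constructor
  · rintro ⟨h1, h2, h3⟩
    rw [hR k hk h1] at h3
    exact ⟨h1, h2, h3⟩
  · rintro ⟨h1, h2, h3⟩
    refine ⟨h1, h2, ?_⟩
    rw [hR k hk h1]
    exact h3

theorem aux_S (T : ℕ) (d σR : ℕ → ℕ)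
    (hR : ∀ t ∈ Finset.Icc 1 T, 0 < d t → σR t = t) (t : ℕ) :
    nlsS T d σR t = 0 := by
  unfold nlsS
  apply Finset.sum_eq_zero
  intro k hk
  rw [Finset.mem_filter] at hk
  obtain ⟨hk, h1, h2, h3⟩ := hk
  rw [hR k hk h1] at h2
  omega

theorem aux_cost (T : ℕ) (d σR σS : ℕ → ℕ) (f p h : ℕ → ℝ) (M : ℝ)
    (hR : ∀ t ∈ Finset.Icc 1 T, 0 < d t → σR t = t) :
    nls2Cost T d f p h (fun _ => 0) (fun _ => 0) (fun _ => M) σR σS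
      = nlsCost T d f p h σS := by
  unfold nls2Cost nlsCost
  apply Finset.sum_congr rfl
  intro t _
  rw [aux_SS T d σR σS hR, aux_S T d σR hR]
  simp

/-- Reduction 2ULS-IB_S-NLS ⟵ ULS-IB-NLS: given a single-level NLS instance
`(d, f, p, h, u)` with integer demands, feasible, with minimum cost `C*`, and
`M > C*`, the two-level NLS instance with supplier data `(f, p, h, u)` and retailer
costs `f^R = p^R = 0`, `h^R = M` (no retailer bound) has minimum cost `C*`. -/
theorem stmt12 (T : ℕ) (hT : 1 ≤ T) (d : ℕ → ℕ) (f p h u : ℕ → ℝ)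
    (hf : ∀ t ∈ Finset.Icc 1 T, 0 ≤ f t) (hp : ∀ t ∈ Finset.Icc 1 T, 0 ≤ p t)
    (hh : ∀ t ∈ Finset.Icc 1 T, 0 ≤ h t) (hu : ∀ t ∈ Finset.Icc 1 T, 0 ≤ u t)
    (Cstar M : ℝ)
    (hCstar : IsLeast {c : ℝ | ∃ σ : ℕ → ℕ,
        (∀ t ∈ Finset.Icc 1 T, 0 < d t → 1 ≤ σ t ∧ σ t ≤ t) ∧
        (∀ t ∈ Finset.Icc 1 T, (nlsS T d σ t : ℝ) ≤ u t) ∧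
        c = nlsCost T d f p h σ} Cstar)
    (hM : Cstar < M) :
    IsLeast {c : ℝ | ∃ σR σS : ℕ → ℕ,
      (∀ t ∈ Finset.Icc 1 T, 0 < d t → 1 ≤ σS t ∧ σS t ≤ σR t ∧ σR t ≤ t) ∧
      (∀ t ∈ Finset.Icc 1 T, (nls2SS T d σR σS t : ℝ) ≤ u t) ∧
      c = nls2Cost T d f p h (fun _ => 0) (fun _ => 0) (fun _ => M) σR σS} Cstar := by
  obtain ⟨⟨σ, h1, h2, h3⟩, hlb⟩ := hCstar
  have hC0 : 0 ≤ Cstar := by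
    rw [h3]
    unfold nlsCost
    apply Finset.sum_nonneg
    intro t ht
    have a := hf t ht
    have b := hp t ht
    have c := hh t ht
    positivity
  have hM0 : 0 ≤ M := hC0.trans hM.le
  constructor
  · refine ⟨fun t => t, σ, ?_, ?_, ?_⟩
    · intro t ht hd
      exact ⟨(h1 t ht hd).1, (h1 t ht hd).2, le_rfl⟩
    · intro t ht
      rw [aux_SS T d _ σ (fun _ _ _ => rfl)]
      exact h2 t ht
    · rw [aux_cost T d _ σ f p h M (fun _ _ _ => rfl)]
      exact h3
  · rintro c ⟨σR, σS, g1, g2, rfl⟩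
    by_cases hR : ∀ t ∈ Finset.Icc 1 T, 0 < d t → σR t = t
    · rw [aux_cost T d σR σS f p h M hR]
      apply hlb
      refine ⟨σS, ?_, ?_, rfl⟩
      · intro t ht hd
        obtain ⟨a, b, c⟩ := g1 t ht hd
        exact ⟨a, b.trans c⟩
      · intro t ht
        rw [← aux_SS T d σR σS hR]
        exact g2 t ht
    · push Not at hR
      obtain ⟨k, hk, hd, hne⟩ := hR
      obtain ⟨a, b, c⟩ := g1 k hk hd
      have hkT := Finset.mem_Icc.mp hk
      have hmem : σR k ∈ Finset.Icc 1 T := Finset.mem_Icc.mpr ⟨by omega, by omega⟩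
      have hs : 1 ≤ nlsS T d σR (σR k) := by
        unfold nlsS
        refine le_trans hd (Finset.single_le_sum (f := d) (fun _ _ => Nat.zero_le _) ?_)
        exact Finset.mem_filter.mpr ⟨hk, hd, le_rfl, by omega⟩
      have hs' : (1 : ℝ) ≤ nlsS T d σR (σR k) := by exact_mod_cast hs
      refine hM.le.trans ?_
      unfold nls2Cost
      have key : ∀ t ∈ Finset.Icc 1 T, 0 ≤ (if 0 < nlsX T d σS t then f t else 0)
          + p t * (nlsX T d σS t : ℝ) + h t * (nls2SS T d σR σS t : ℝ) := by
        intro t ht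
        have a := hf t ht
        have b := hp t ht
        have c := hh t ht
        positivity
      refine le_trans ?_ (Finset.single_le_sum (fun t ht => ?_) hmem)
      · have := key _ hmem
        simp only [ite_self, zero_mul, add_zero]
        nlinarith
      · have := key _ ht
        simp only [ite_self, zero_mul, add_zero]
        positivity
end

section
/- Let (d, f, p, h, u) be a single-level no-lot-splitting instance over T periods with nonnegative integer demands d_t and nonnegative real costs and bounds, admitting at least one feasible NLS plan, with minimum cost C*. Let M > C* be real and let u^R_t ≥ 0 (t = 1,…,T) be arbitrary nonnegative retailer inventory bounds. Consider the two-level no-lot-splitting instance with the same demands d, supplier costs f^S = f, p^S = p, h^S = h, supplier inventory bounds u^S = u, retailer costs f^R_t = p^R_t = 0 and h^R_t = M for all t, and retailer inventory bounds u^R. Then the minimum total cost over all feasible two-level NLS plans of this instance equals C*. In particular, imposing inventory bounds at both levels does not change the optimal value of this reduction instance. -/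
/-- Reduction 2ULS-IB_SR-NLS ⟵ ULS-IB-NLS: given a single-level NLS instance
`(d, f, p, h, u)` with integer demands, feasible, with minimum cost `C*`, `M > C*`,
and arbitrary nonnegative retailer inventory bounds `uR`, the two-level NLS instance
with supplier data `(f, p, h, u)`, retailer costs `f^R = p^R = 0`, `h^R = M` and
retailer bounds `uR` has minimum cost `C*`. -/
theorem stmt13 (T : ℕ) (hT : 1 ≤ T) (d : ℕ → ℕ) (f p h u : ℕ → ℝ)
    (hf : ∀ t ∈ Finset.Icc 1 T, 0 ≤ f t) (hp : ∀ t ∈ Finset.Icc 1 T, 0 ≤ p t)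
    (hh : ∀ t ∈ Finset.Icc 1 T, 0 ≤ h t) (hu : ∀ t ∈ Finset.Icc 1 T, 0 ≤ u t)
    (Cstar M : ℝ)
    (hCstar : IsLeast {c : ℝ | ∃ σ : ℕ → ℕ,
        (∀ t ∈ Finset.Icc 1 T, 0 < d t → 1 ≤ σ t ∧ σ t ≤ t) ∧
        (∀ t ∈ Finset.Icc 1 T, (nlsS T d σ t : ℝ) ≤ u t) ∧
        c = nlsCost T d f p h σ} Cstar)
    (hM : Cstar < M) (uR : ℕ → ℝ) (huR : ∀ t ∈ Finset.Icc 1 T, 0 ≤ uR t) :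
    IsLeast {c : ℝ | ∃ σR σS : ℕ → ℕ,
      (∀ t ∈ Finset.Icc 1 T, 0 < d t → 1 ≤ σS t ∧ σS t ≤ σR t ∧ σR t ≤ t) ∧
      (∀ t ∈ Finset.Icc 1 T, (nls2SS T d σR σS t : ℝ) ≤ u t) ∧
      (∀ t ∈ Finset.Icc 1 T, (nlsS T d σR t : ℝ) ≤ uR t) ∧
      c = nls2Cost T d f p h (fun _ => 0) (fun _ => 0) (fun _ => M) σR σS} Cstar := by
  have hC0 : 0 ≤ Cstar := by
    obtain ⟨σ, -, -, hc⟩ := hCstar.1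
    rw [hc]
    unfold nlsCost
    refine Finset.sum_nonneg fun t ht => ?_
    have h1 := hf t ht
    have h2 := mul_nonneg (hp t ht) (Nat.cast_nonneg (α := ℝ) (nlsX T d σ t))
    have h3 := mul_nonneg (hh t ht) (Nat.cast_nonneg (α := ℝ) (nlsS T d σ t))
    split_ifs <;> linarith
  have hM0 : 0 ≤ M := by linarith
  -- plans in which the retailer orders just in time
  have hR0 : ∀ σR : ℕ → ℕ, (∀ t ∈ Finset.Icc 1 T, 0 < d t → σR t = t) →
      ∀ t, nlsS T d σR t = 0 := by
    intro σR hR t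
    unfold nlsS
    refine Finset.sum_eq_zero fun k hk => ?_
    rw [Finset.mem_filter] at hk
    have := hR k hk.1 hk.2.1
    omega
  have hSS : ∀ σR σS : ℕ → ℕ, (∀ t ∈ Finset.Icc 1 T, 0 < d t → σR t = t) →
      ∀ t, nls2SS T d σR σS t = nlsS T d σS t := by
    intro σR σS hR t
    unfold nlsS nls2SS
    refine Finset.sum_congr (Finset.filter_congr fun k hk => ?_) fun _ _ => rfl
    constructor
    · rintro ⟨a, b, c⟩
      rw [hR k hk a] at c
      exact ⟨a, b, c⟩
    · rintro ⟨a, b, c⟩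
      refine ⟨a, b, ?_⟩
      rw [hR k hk a]
      exact c
  have hcost : ∀ σR σS : ℕ → ℕ, (∀ t ∈ Finset.Icc 1 T, 0 < d t → σR t = t) →
      nls2Cost T d f p h (fun _ => 0) (fun _ => 0) (fun _ => M) σR σS
        = nlsCost T d f p h σS := by
    intro σR σS hR
    unfold nls2Cost nlsCost
    refine Finset.sum_congr rfl fun t _ => ?_
    rw [hR0 σR hR, hSS σR σS hR]
    simp
  constructor
  · obtain ⟨σ, h1, h2, hc⟩ := hCstar.1
    have hid : ∀ t ∈ Finset.Icc 1 T, 0 < d t → (fun k : ℕ => k) t = t := fun _ _ _ => rfl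
    refine ⟨fun k => k, σ, fun t ht hd => ⟨(h1 t ht hd).1, (h1 t ht hd).2, le_rfl⟩, ?_, ?_, ?_⟩
    · intro t ht
      rw [hSS _ σ hid]
      exact h2 t ht
    · intro t ht
      rw [hR0 _ hid]
      simpa using huR t ht
    · rw [hcost _ σ hid]
      exact hc
  · rintro c ⟨σR, σS, h1, h2, h3, rfl⟩
    by_cases hR : ∀ t ∈ Finset.Icc 1 T, 0 < d t → σR t = t
    · refine hCstar.2 ⟨σS, fun t ht hd => ?_, fun t ht => ?_, hcost σR σS hR⟩
      · have := h1 t ht hd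
        omega
      · rw [← hSS σR σS hR]
        exact h2 t ht
    · push Not at hR
      obtain ⟨k, hk, hd, hne⟩ := hR
      have hk1 := h1 k hk hd
      have hk' := Finset.mem_Icc.1 hk
      have hmem : σR k ∈ Finset.Icc 1 T := Finset.mem_Icc.2 (by omega)
      have hs : 1 ≤ nlsS T d σR (σR k) := by
        unfold nlsS
        refine le_trans hd (Finset.single_le_sum (f := d) (fun _ _ => Nat.zero_le _) ?_)
        rw [Finset.mem_filter]
        exact ⟨hk, hd, le_rfl, by omega⟩
      have hsR : (1 : ℝ) ≤ (nlsS T d σR (σR k) : ℝ) := by exact_mod_cast hs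
      have hterm : ∀ t ∈ Finset.Icc 1 T, M * (nlsS T d σR t : ℝ) ≤
          ((if 0 < nlsX T d σS t then f t else 0) + p t * (nlsX T d σS t : ℝ) +
            h t * (nls2SS T d σR σS t : ℝ) +
           (if 0 < nlsX T d σR t then (0 : ℝ) else 0) + 0 * (nlsX T d σR t : ℝ) +
            M * (nlsS T d σR t : ℝ)) := by
        intro t ht
        have g1 := hf t ht
        have g2 := mul_nonneg (hp t ht) (Nat.cast_nonneg (α := ℝ) (nlsX T d σS t))
        have g3 := mul_nonneg (hh t ht) (Nat.cast_nonneg (α := ℝ) (nls2SS T d σR σS t))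
        split_ifs <;> linarith
      have hsum : ∑ t ∈ Finset.Icc 1 T, M * (nlsS T d σR t : ℝ) ≤
          nls2Cost T d f p h (fun _ => 0) (fun _ => 0) (fun _ => M) σR σS :=
        Finset.sum_le_sum hterm
      have hsingle : M * (nlsS T d σR (σR k) : ℝ) ≤
          ∑ t ∈ Finset.Icc 1 T, M * (nlsS T d σR t : ℝ) :=
        Finset.single_le_sum (f := fun t => M * (nlsS T d σR t : ℝ))
          (fun t _ => mul_nonneg hM0 (Nat.cast_nonneg _)) hmem
      have : M ≤ M * (nlsS T d σR (σR k) : ℝ) := le_mul_of_one_le_right hM0 hsR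
      linarith
end

section
/- Consider a two-level instance with nonnegative integer demands d_t, nonnegative integer inventory bounds u^R_t and u^S_t at the retailer and supplier levels, and nonnegative real costs f^S_t, p^S_t, h^S_t, f^R_t, p^R_t, h^R_t (t = 1,…,T). For a level i ∈ {R,S} and integer X ≥ 0 set C^i_t(X) = f^i_t + p^i_t·X if X > 0 and C^i_t(0) = 0. Define H_{T+1}(a,b) = 0 for all integers a, b ≥ 0, and for t = T down to 1 and integers 0 ≤ a ≤ u^R_{t-1}, 0 ≤ b ≤ u^S_{t-1} (with u^R_0 = u^S_0 = 0) define H_t(a,b) as the minimum, over integers s̄ with max(0, a − d_t) ≤ s̄ ≤ min(u^R_t, d_{tT}) and integers s with max(0, b − X^R) ≤ s ≤ min(u^S_t, d_{tT}) such that s̄ + s ≤ d_{tT}, where X^R = s̄ + d_t − a and X^S = s + X^R − b, of C^R_t(X^R) + C^S_t(X^S) + h^R_t·s̄ + h^S_t·s + H_{t+1}(s̄, s) (the minimum of an empty set being +∞), where d_{tT} = Σ_{i=t}^{T} d_i. Then H_1(0,0) equals the minimum total cost over all integer-valued feasible two-level plans of the instance (and equals +∞ if no such plan exists). -/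
open scoped ENNReal

/-- Cumulative demand `d_{tT} = Σ_{i=t}^{T} d i`. -/
def dtT (T : ℕ) (d : ℕ → ℕ) (t : ℕ) : ℕ := ∑ i ∈ Finset.Icc t T, d i

/-- Ordering cost `C_t(X) = f + p·X` if `X > 0`, and `0` if `X = 0`. -/
noncomputable def ordCost (f p : ℝ) (X : ℕ) : ℝ := if 0 < X then f + p * X else 0

/-- The dynamic program of the 2ULS-IB_SR problem: `dpH … n a b` is the value
`H_t(a, b)` for `t = T + 1 − n`, i.e. the optimal cost of satisfying the demands of
periods `t,…,T` starting with retailer inventory `a` and supplier inventory `b`.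
`H_{T+1}(a,b) = 0` and `H_t(a,b)` is the minimum over integers
`max(0, a − d t) ≤ s̄ ≤ min(uR t, d_{tT})` and `max(0, b − X^R) ≤ s ≤ min(uS t, d_{tT})`
with `s̄ + s ≤ d_{tT}`, where `X^R = s̄ + d t − a` and `X^S = s + X^R − b`, of
`C^R_t(X^R) + C^S_t(X^S) + h^R_t·s̄ + h^S_t·s + H_{t+1}(s̄, s)` (minimum of the empty
set being `+∞`). -/
noncomputable def dpH (T : ℕ) (d uR uS : ℕ → ℕ) (fR pR hR fS pS hS : ℕ → ℝ) :
    ℕ → ℕ → ℕ → ℝ≥0∞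
  | 0, _, _ => 0
  | n + 1, a, b =>
    letI t := T - n
    (((Finset.range (min (uR t) (dtT T d t) + 1)) ×ˢ
        (Finset.range (min (uS t) (dtT T d t) + 1))).filter
      (fun q => a ≤ q.1 + d t ∧ b ≤ q.1 + d t - a + q.2 ∧ q.1 + q.2 ≤ dtT T d t)).inf
      (fun q =>
        ENNReal.ofReal
          (ordCost (fR t) (pR t) (q.1 + d t - a) +
           ordCost (fS t) (pS t) (q.2 + (q.1 + d t - a) - b) +
           hR t * q.1 + hS t * q.2) +
        dpH T d uR uS fR pR hR fS pS hS n q.1 q.2)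

theorem sumIcc_split {M : Type*} [AddCommMonoid M] (f : ℕ → M) {t T : ℕ} (h : t ≤ T) :
    ∑ i ∈ Finset.Icc t T, f i = f t + ∑ i ∈ Finset.Icc (t + 1) T, f i := by
  have : Finset.Icc t T = insert t (Finset.Icc (t + 1) T) := by
    ext x; simp only [Finset.mem_Icc, Finset.mem_insert]; omega
  rw [this, Finset.sum_insert (by simp)]

/-- per-period cost of a plan -/
noncomputable def perCost (fR pR hR fS pS hS : ℕ → ℝ) (xR sR xS sS : ℕ → ℕ) (t : ℕ) : ℝ :=
  (if 0 < xS t then fS t else 0) + pS t * (xS t : ℝ) + hS t * (sS t : ℝ) +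
           (if 0 < xR t then fR t else 0) + pR t * (xR t : ℝ) + hR t * (sR t : ℝ)

theorem ordCost_eq (f p : ℝ) (X : ℕ) : ordCost f p X = (if 0 < X then f else 0) + p * X := by
  unfold ordCost
  rcases Nat.eq_zero_or_pos X with h | h
  · simp [h]
  · simp [h]

theorem ordCost_mono {f p : ℝ} (hf : 0 ≤ f) (hp : 0 ≤ p) {X Y : ℕ} (h : X ≤ Y) :
    ordCost f p X ≤ ordCost f p Y := by
  rw [ordCost_eq, ordCost_eq]
  have h2 : p * (X : ℝ) ≤ p * Y := mul_le_mul_of_nonneg_left (by exact_mod_cast h) hp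
  have h1 : (if 0 < X then f else 0) ≤ (if 0 < Y then f else 0) := by
    split_ifs
    · exact le_rfl
    · omega
    · exact hf
    · exact le_rfl
  linarith

theorem perCost_nonneg {fR pR hR fS pS hS : ℕ → ℝ} {t : ℕ}
    (hfR : 0 ≤ fR t) (hpR : 0 ≤ pR t) (hhR : 0 ≤ hR t) (hfS : 0 ≤ fS t)
    (hpS : 0 ≤ pS t) (hhS : 0 ≤ hS t) (xR sR xS sS : ℕ → ℕ) :
    0 ≤ perCost fR pR hR fS pS hS xR sR xS sS t := by
  unfold perCost
  have h1 : 0 ≤ (if 0 < xS t then fS t else 0) := by split_ifs <;> simp [hfS]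
  have h2 : 0 ≤ (if 0 < xR t then fR t else 0) := by split_ifs <;> simp [hfR]
  positivity

theorem dp_le_plan (T : ℕ) (d uR uS : ℕ → ℕ)
    (fR pR hR fS pS hS : ℕ → ℝ)
    (hfR : ∀ t ∈ Finset.Icc 1 T, 0 ≤ fR t) (hpR : ∀ t ∈ Finset.Icc 1 T, 0 ≤ pR t)
    (hhR : ∀ t ∈ Finset.Icc 1 T, 0 ≤ hR t) (hfS : ∀ t ∈ Finset.Icc 1 T, 0 ≤ fS t)
    (hpS : ∀ t ∈ Finset.Icc 1 T, 0 ≤ pS t) (hhS : ∀ t ∈ Finset.Icc 1 T, 0 ≤ hS t)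
    (xR sR xS sS : ℕ → ℕ)
    (h1 : ∀ t ∈ Finset.Icc 1 T, sR (t - 1) + xR t = d t + sR t)
    (h2 : ∀ t ∈ Finset.Icc 1 T, sS (t - 1) + xS t = xR t + sS t)
    (h3 : ∀ t ∈ Finset.Icc 1 T, sR t ≤ uR t)
    (h4 : ∀ t ∈ Finset.Icc 1 T, sS t ≤ uS t) (n : ℕ) (hn : n ≤ T) :
    dpH T d uR uS fR pR hR fS pS hS n (min (sR (T - n)) (dtT T d (T - n + 1)))
      (min (sR (T - n) + sS (T - n)) (dtT T d (T - n + 1)) -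
        min (sR (T - n)) (dtT T d (T - n + 1))) ≤
      ENNReal.ofReal (∑ t ∈ Finset.Icc (T - n + 1) T,
        perCost fR pR hR fS pS hS xR sR xS sS t) := by
  induction n with
  | zero => simp [dpH]
  | succ n ih =>
    have ih := ih (by omega)
    have e1 : T - (n + 1) + 1 = T - n := by omega
    have e2 : T - (n + 1) = T - n - 1 := by omega
    rw [e1, e2]
    have ht : T - n ∈ Finset.Icc 1 T := by simp; omega
    rw [sumIcc_split _ (show T - n ≤ T by omega), dpH]
    have hD : dtT T d (T - n) = d (T - n) + dtT T d (T - n + 1) :=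
      sumIcc_split _ (by omega)
    generalize T - n = t at *
    have g1 := h1 t ht
    have g2 := h2 t ht
    have g3 := h3 t ht
    have g4 := h4 t ht
    generalize hE : dtT T d (t + 1) = E at *
    rw [hD]
    rw [ENNReal.ofReal_add]
    · refine le_trans (Finset.inf_le (b := (min (sR t) E, min (sR t + sS t) E - min (sR t) E)) ?_) ?_
      · simp only [Finset.mem_filter, Finset.mem_product, Finset.mem_range]
        omega
      · refine add_le_add (ENNReal.ofReal_le_ofReal ?_) ih
        have k1 := ordCost_mono (hfR t ht) (hpR t ht)
          (show min (sR t) E + d t - min (sR (t - 1)) (d t + E) ≤ xR t by omega)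
        have k2 := ordCost_mono (hfS t ht) (hpS t ht)
          (show min (sR t + sS t) E - min (sR t) E +
            (min (sR t) E + d t - min (sR (t - 1)) (d t + E)) -
              (min (sR (t - 1) + sS (t - 1)) (d t + E) - min (sR (t - 1)) (d t + E)) ≤ xS t by omega)
        have k3 : hR t * ((min (sR t) E : ℕ) : ℝ) ≤ hR t * (sR t : ℝ) :=
          mul_le_mul_of_nonneg_left (by exact_mod_cast min_le_left _ _) (hhR t ht)
        have k4 : hS t * ((min (sR t + sS t) E - min (sR t) E : ℕ) : ℝ) ≤ hS t * (sS t : ℝ) :=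
          mul_le_mul_of_nonneg_left (Nat.cast_le.mpr (by omega)) (hhS t ht)
        rw [ordCost_eq _ _ (xR t)] at k1
        rw [ordCost_eq _ _ (xS t)] at k2
        unfold perCost
        linarith
    · exact perCost_nonneg (hfR t ht) (hpR t ht) (hhR t ht) (hfS t ht) (hpS t ht) (hhS t ht) _ _ _ _
    · refine Finset.sum_nonneg fun i hi => ?_
      have hi : i ∈ Finset.Icc 1 T := by simp at hi ⊢; omega
      exact perCost_nonneg (hfR i hi) (hpR i hi) (hhR i hi) (hfS i hi) (hpS i hi) (hhS i hi) _ _ _ _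

theorem plan_of_dp (T : ℕ) (d uR uS : ℕ → ℕ)
    (fR pR hR fS pS hS : ℕ → ℝ)
    (hfR : ∀ t ∈ Finset.Icc 1 T, 0 ≤ fR t) (hpR : ∀ t ∈ Finset.Icc 1 T, 0 ≤ pR t)
    (hhR : ∀ t ∈ Finset.Icc 1 T, 0 ≤ hR t) (hfS : ∀ t ∈ Finset.Icc 1 T, 0 ≤ fS t)
    (hpS : ∀ t ∈ Finset.Icc 1 T, 0 ≤ pS t) (hhS : ∀ t ∈ Finset.Icc 1 T, 0 ≤ hS t)
    (n : ℕ) (hn : n ≤ T) (a b : ℕ) :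
    dpH T d uR uS fR pR hR fS pS hS n a b = ⊤ ∨
    ∃ xR sR xS sS : ℕ → ℕ, sR (T - n) = a ∧ sS (T - n) = b ∧
      (∀ t ∈ Finset.Icc (T - n + 1) T, sR (t - 1) + xR t = d t + sR t) ∧
      (∀ t ∈ Finset.Icc (T - n + 1) T, sS (t - 1) + xS t = xR t + sS t) ∧
      (∀ t ∈ Finset.Icc (T - n + 1) T, sR t ≤ uR t) ∧
      (∀ t ∈ Finset.Icc (T - n + 1) T, sS t ≤ uS t) ∧
      dpH T d uR uS fR pR hR fS pS hS n a b =
        ENNReal.ofReal (∑ t ∈ Finset.Icc (T - n + 1) T,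
          perCost fR pR hR fS pS hS xR sR xS sS t) := by
  induction n generalizing a b with
  | zero =>
    refine Or.inr ⟨fun _ => 0, fun _ => a, fun _ => 0, fun _ => b, ?_⟩
    simp [dpH]
  | succ n ih =>
    have ih := ih (by omega)
    have e1 : T - (n + 1) + 1 = T - n := by omega
    have e2 : T - (n + 1) = T - n - 1 := by omega
    rw [e1, e2]
    have ht : T - n ∈ Finset.Icc 1 T := by simp; omega
    rw [dpH]
    generalize T - n = t at *
    have ht' := Finset.mem_Icc.mp ht
    rw [or_iff_not_imp_left]
    intro hne
    generalize hF : (((Finset.range (min (uR t) (dtT T d t) + 1)) ×ˢ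
        (Finset.range (min (uS t) (dtT T d t) + 1))).filter
      (fun q : ℕ × ℕ => a ≤ q.1 + d t ∧ b ≤ q.1 + d t - a + q.2 ∧ q.1 + q.2 ≤ dtT T d t)) = F at *
    have hFne : F.Nonempty := by
      by_contra h
      rw [Finset.not_nonempty_iff_eq_empty] at h
      apply hne
      simp [h]
    obtain ⟨q, hq, he⟩ := Finset.exists_mem_eq_inf F hFne (fun q : ℕ × ℕ =>
        ENNReal.ofReal
          (ordCost (fR t) (pR t) (q.1 + d t - a) +
           ordCost (fS t) (pS t) (q.2 + (q.1 + d t - a) - b) +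
           hR t * q.1 + hS t * q.2) +
        dpH T d uR uS fR pR hR fS pS hS n q.1 q.2)
    rw [he] at hne ⊢
    rw [← hF] at hq
    simp only [Finset.mem_filter, Finset.mem_product, Finset.mem_range] at hq
    rcases ih q.1 q.2 with h | ⟨xR, sR, xS, sS, c1, c2, c3, c4, c5, c6, c7⟩
    · exact absurd (by simp [h]) hne
    have key : ∀ i ∈ Finset.Icc t T, i = t ∨ (i ∈ Finset.Icc (t + 1) T ∧ i ≠ t ∧ i ≠ t - 1 ∧
        (i - 1 ≠ t - 1)) := by
      intro i hi
      simp only [Finset.mem_Icc] at hi ⊢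
      omega
    have htt : t ≠ t - 1 := by omega
    refine ⟨Function.update xR t (q.1 + d t - a), Function.update sR (t - 1) a,
      Function.update xS t (q.2 + (q.1 + d t - a) - b), Function.update sS (t - 1) b,
      by simp, by simp, ?_, ?_, ?_, ?_, ?_⟩
    · intro i hi
      rcases key i hi with rfl | ⟨hi, n1, n2, n3⟩
      · simp [htt]; omega
      · simp [n1, n2, n3]; exact c3 i hi
    · intro i hi
      rcases key i hi with rfl | ⟨hi, n1, n2, n3⟩
      · simp [htt]; omega
      · simp [n1, n2, n3]; exact c4 i hi
    · intro i hi
      rcases key i hi with rfl | ⟨hi, n1, n2, n3⟩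
      · simp [htt]; omega
      · simp [n2]; exact c5 i hi
    · intro i hi
      rcases key i hi with rfl | ⟨hi, n1, n2, n3⟩
      · simp [htt]; omega
      · simp [n2]; exact c6 i hi
    · rw [sumIcc_split _ ht'.2]
      refine Eq.trans ?_ (ENNReal.ofReal_add ?_ ?_).symm
      · rw [c7]
        congr 2
        · simp only [perCost, ordCost_eq, Function.update_self, Function.update_of_ne htt, c1, c2]
          ring
        · refine Finset.sum_congr rfl fun i hi => ?_
          have hi' := Finset.mem_Icc.mp hi
          have n1 : i ≠ t := by omega
          have n2 : i ≠ t - 1 := by omega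
          simp only [perCost, Function.update_of_ne n1, Function.update_of_ne n2]
      · exact perCost_nonneg (hfR t ht) (hpR t ht) (hhR t ht) (hfS t ht) (hpS t ht) (hhS t ht) _ _ _ _
      · refine Finset.sum_nonneg fun i hi => ?_
        have hi : i ∈ Finset.Icc 1 T := by simp at hi ⊢; omega
        exact perCost_nonneg (hfR i hi) (hpR i hi) (hhR i hi) (hfS i hi) (hpS i hi) (hhS i hi) _ _ _ _

/-- Correctness of the pseudo-polynomial dynamic program for 2ULS-IB_SR:
`H_1(0,0)` (i.e. `dpH … T 0 0`) equals the minimum total cost over all integer-valued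
feasible two-level plans (and `+∞` if none exists). -/
theorem stmt14 (T : ℕ) (hT : 1 ≤ T) (d uR uS : ℕ → ℕ)
    (fR pR hR fS pS hS : ℕ → ℝ)
    (hfR : ∀ t ∈ Finset.Icc 1 T, 0 ≤ fR t) (hpR : ∀ t ∈ Finset.Icc 1 T, 0 ≤ pR t)
    (hhR : ∀ t ∈ Finset.Icc 1 T, 0 ≤ hR t) (hfS : ∀ t ∈ Finset.Icc 1 T, 0 ≤ fS t)
    (hpS : ∀ t ∈ Finset.Icc 1 T, 0 ≤ pS t) (hhS : ∀ t ∈ Finset.Icc 1 T, 0 ≤ hS t) :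
    dpH T d uR uS fR pR hR fS pS hS T 0 0 =
      sInf {c : ℝ≥0∞ | ∃ xR sR xS sS : ℕ → ℕ,
        sR 0 = 0 ∧ sS 0 = 0 ∧
        (∀ t ∈ Finset.Icc 1 T, sR (t - 1) + xR t = d t + sR t) ∧
        (∀ t ∈ Finset.Icc 1 T, sS (t - 1) + xS t = xR t + sS t) ∧
        (∀ t ∈ Finset.Icc 1 T, sR t ≤ uR t) ∧
        (∀ t ∈ Finset.Icc 1 T, sS t ≤ uS t) ∧
        c = ENNReal.ofReal (∑ t ∈ Finset.Icc 1 T,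
          ((if 0 < xS t then fS t else 0) + pS t * (xS t : ℝ) + hS t * (sS t : ℝ) +
           (if 0 < xR t then fR t else 0) + pR t * (xR t : ℝ) + hR t * (sR t : ℝ)))} := by
  apply le_antisymm
  · refine le_sInf ?_
    rintro c ⟨xR, sR, xS, sS, z1, z2, h1, h2, h3, h4, rfl⟩
    have := dp_le_plan T d uR uS fR pR hR fS pS hS hfR hpR hhR hfS hpS hhS xR sR xS sS
      h1 h2 h3 h4 T le_rfl
    simpa [z1, z2, perCost] using this
  · rcases plan_of_dp T d uR uS fR pR hR fS pS hS hfR hpR hhR hfS hpS hhS T le_rfl 0 0 with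
      h | ⟨xR, sR, xS, sS, c1, c2, c3, c4, c5, c6, c7⟩
    · rw [h]; exact le_top
    · simp only [Nat.sub_self, Nat.zero_add] at c1 c2 c3 c4 c5 c6 c7
      exact sInf_le ⟨xR, sR, xS, sS, c1, c2, c3, c4, c5, c6, c7⟩
end
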